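/- Let α > 0, p > 3 and q ≥ 2. There exists a constant C ∈ (0,∞), depending only on α, p, q, such that for every locally Lipschitz g : ℝ³ → ℝ one has ∫ |g|^q N^{p−3} e^{−α N^p} dx ≤ C ∫ (|∇g|^q + |g|^q) e^{−α N^p} dx, where ∇ is the Heisenberg sub-gradient; moreover the function η = N^{p−3} is continuous, nonnegative and diverges to infinity in all directions (η(x) → ∞ as |x| → ∞). -/

import Mathlib

open MeasureTheory Filter
open scoped ENNReal

noncomputable section

/-- The underlying space `ℝ³` of the Heisenberg group. -/
abbrev Spin3 : Type := Fin 3 → ℝ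

/-- The Heisenberg vector field `X¹ = ∂₁ + 2x₂∂₃` applied to `f` at `x`. -/
def X1 (f : Spin3 → ℝ) (x : Spin3) : ℝ :=
  fderiv ℝ f x (Pi.single 0 1) + 2 * x 1 * fderiv ℝ f x (Pi.single 2 1)

/-- The Heisenberg vector field `X² = ∂₂ − 2x₁∂₃` applied to `f` at `x`. -/
def X2 (f : Spin3 → ℝ) (x : Spin3) : ℝ :=
  fderiv ℝ f x (Pi.single 1 1) - 2 * x 0 * fderiv ℝ f x (Pi.single 2 1)

/-- The length `|∇f|` of the Heisenberg sub-gradient `∇f = (X¹f, X²f)`. -/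
def hGrad (f : Spin3 → ℝ) (x : Spin3) : ℝ := Real.sqrt (X1 f x ^ 2 + X2 f x ^ 2)

/-- The Kaplan norm `N(x) = ((x₁²+x₂²)² + 16x₃²)^{1/4}` on the Heisenberg group. -/
def kaplan (x : Spin3) : ℝ := ((x 0 ^ 2 + x 1 ^ 2) ^ 2 + 16 * x 2 ^ 2) ^ ((1 : ℝ) / 4)

/-! Let `W = α N^p`. For a horizontal vector field `V` and compactly supported `g`, integrating
`div (|g|^q e^{-W} V)` to zero gives
`∫ |g|^q (⟨∇W, V⟩ - div V) e^{-W} = ∫ ⟨∇|g|^q, V⟩ e^{-W}`, and Young's inequality bounds the right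
side by `ε ∫ |g|^q ‖V‖^{q'} e^{-W}` plus a multiple of `∫ |∇g|^q e^{-W}`. The U-bound follows once
`⟨∇W, V⟩ - div V - ε ‖V‖^{q'}` dominates `η` up to a constant. A multiple of `∇N` alone cannot do
this, because `∇N` vanishes on the vertical axis `z = 0`. Subtracting a multiple of the horizontal
projection `z` repairs it: the divergence of `z` is the constant `2`, while far out the loss
`⟨∇W, z⟩` is at most half of what the `∇N` part gains. Cutoffs in `log (1 + N⁴)` and
Fatou's lemma remove the compact support. -/

section LocallyLipschitz

lemma locallyLipschitz_smul {X E : Type*} [PseudoEMetricSpace X] [NormedAddCommGroup E]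
    [NormedSpace ℝ E] {f : X → ℝ} {V : X → E} (hf : LocallyLipschitz f)
    (hV : LocallyLipschitz V) : LocallyLipschitz fun x => f x • V x :=
  (contDiff_smul (𝕜 := ℝ) (F := E) (n := 1)).locallyLipschitz.comp (hf.prodMk hV)

lemma exists_lipschitzWith_of_hasCompactSupport {X E : Type*} [PseudoMetricSpace X]
    [ProperSpace X] [SeminormedAddCommGroup E] {f : X → E} (hf : LocallyLipschitz f)
    (hc : HasCompactSupport f) : ∃ C, LipschitzWith C f := by
  have hS : IsCompact (Metric.cthickening 1 (tsupport f)) := hc.isCompact.cthickening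
  obtain ⟨C, hC⟩ := hf.locallyLipschitzOn.exists_lipschitzOnWith_of_compact hS
  obtain ⟨M, hM⟩ := hc.exists_bound_of_continuous hf.continuous
  have near_support : ∀ x ∈ tsupport f, ∀ y,
      dist (f x) (f y) ≤ (C + M.toNNReal : NNReal) * dist x y := by
    intro x hx y
    have hM0 : 0 ≤ M := (norm_nonneg _).trans (hM x)
    rw [NNReal.coe_add, Real.coe_toNNReal M hM0, add_mul]
    by_cases hy : y ∈ Metric.cthickening 1 (tsupport f)
    · have := hC.dist_le_mul x (Metric.self_subset_cthickening _ hx) y hy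
      have : 0 ≤ M * dist x y := by positivity
      linarith
    · have hfy : f y = 0 := image_eq_zero_of_notMem_tsupport fun h =>
        hy (Metric.self_subset_cthickening _ h)
      have hxy : 1 < dist x y := by
        contrapose! hy
        exact Metric.mem_cthickening_of_dist_le y x 1 _ hx (dist_comm x y ▸ hy)
      have : M ≤ M * dist x y := le_mul_of_one_le_right hM0 hxy.le
      have : 0 ≤ C * dist x y := by positivity
      rw [hfy, dist_zero_right]
      linarith [hM x]
  refine ⟨C + M.toNNReal, LipschitzWith.of_dist_le_mul fun x y => ?_⟩
  by_cases hx : x ∈ tsupport f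
  · exact near_support x hx y
  by_cases hy : y ∈ tsupport f
  · rw [dist_comm (f x), dist_comm x]
    exact near_support y hy x
  · rw [image_eq_zero_of_notMem_tsupport hx, image_eq_zero_of_notMem_tsupport hy, dist_self]
    positivity

variable {E : Type*} [NormedAddCommGroup E] [NormedSpace ℝ E] [FiniteDimensional ℝ E]
  [MeasurableSpace E] [BorelSpace E] {μ : Measure E} [μ.IsAddHaarMeasure]

lemma ae_differentiableAt_of_locallyLipschitz {F : Type*} [NormedAddCommGroup F]
    [NormedSpace ℝ F] [FiniteDimensional ℝ F] {f : E → F} (hf : LocallyLipschitz f) :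
    ∀ᵐ x ∂μ, DifferentiableAt ℝ f x := by
  refine measure_null_of_locally_null _ fun x _ => ?_
  obtain ⟨K, t, ht, hK⟩ := hf x
  refine ⟨_, inter_mem_nhdsWithin _ (interior_mem_nhds.2 ht), ?_⟩
  refine measure_mono_null ?_ (ae_iff.1 hK.ae_differentiableWithinAt_of_mem)
  rintro y ⟨hy, hyt⟩ hdiff
  exact hy ((hdiff (interior_subset hyt)).differentiableAt (mem_interior_iff_mem_nhds.1 hyt))

lemma integrable_fderiv_apply {f : E → ℝ} (hf : LocallyLipschitz f) (hc : HasCompactSupport f)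
    (v : E) : Integrable (fun x => fderiv ℝ f x v) μ := by
  obtain ⟨C, hC⟩ := exists_lipschitzWith_of_hasCompactSupport hf hc
  have hbound : ∀ x, ‖fderiv ℝ f x v‖ ≤ C * ‖v‖ := fun x =>
    (fderiv ℝ f x).le_of_opNorm_le (norm_fderiv_le_of_lipschitz ℝ hC) v
  have hsupp : Function.support (fun x => fderiv ℝ f x v) ⊆ tsupport f := fun x hx =>
    support_fderiv_subset ℝ fun h => hx (by simp [h])
  rw [← integrableOn_iff_integrable_of_support_subset hsupp]
  exact Measure.integrableOn_of_bounded hc.isCompact.measure_lt_top.ne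
    (measurable_fderiv_apply_const ℝ f v).aestronglyMeasurable (Eventually.of_forall hbound)

lemma integral_fderiv_apply_eq_zero {f : E → ℝ} (hf : LocallyLipschitz f)
    (hc : HasCompactSupport f) (v : E) : ∫ x, fderiv ℝ f x v ∂μ = 0 := by
  obtain ⟨C, hC⟩ := exists_lipschitzWith_of_hasCompactSupport hf hc
  have hparts := (LipschitzWith.const (1 : ℝ)).integral_lineDeriv_mul_eq (μ := μ) hC hc (-v)
  calc ∫ x, fderiv ℝ f x v ∂μ = ∫ x, lineDeriv ℝ f x v ∂μ := by
        refine integral_congr_ae ?_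
        filter_upwards [hC.ae_differentiableAt (μ := μ)] with x hx
        exact hx.lineDeriv_eq_fderiv.symm
    _ = 0 := by simpa [lineDeriv] using hparts.symm

end LocallyLipschitz

lemma ofReal_integral_le_lintegral_ofReal {X : Type*} [MeasurableSpace X] {μ : Measure X}
    {f : X → ℝ} (hf : Integrable f μ) :
    ENNReal.ofReal (∫ x, f x ∂μ) ≤ ∫⁻ x, ENNReal.ofReal (f x) ∂μ := by
  rw [integral_eq_lintegral_pos_part_sub_lintegral_neg_part hf]
  exact (ENNReal.ofReal_le_ofReal (sub_le_self _ ENNReal.toReal_nonneg)).trans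
    ENNReal.ofReal_toReal_le

lemma lintegral_ofReal_le_of_add_le {X : Type*} [MeasurableSpace X] {μ : Measure X}
    {A B D : X → ℝ} (hA : Integrable A μ) (hA0 : 0 ≤ᵐ[μ] A) (hD : Integrable D μ)
    (hD0 : ∫ x, D x ∂μ = 0) (h : ∀ᵐ x ∂μ, A x + D x ≤ B x) :
    ∫⁻ x, ENNReal.ofReal (A x) ∂μ ≤ ∫⁻ x, ENNReal.ofReal (B x) ∂μ :=
  calc ∫⁻ x, ENNReal.ofReal (A x) ∂μ = ENNReal.ofReal (∫ x, A x + D x ∂μ) := by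
        rw [integral_add hA hD, hD0, add_zero, ofReal_integral_eq_lintegral_ofReal hA hA0]
    _ ≤ ∫⁻ x, ENNReal.ofReal (A x + D x) ∂μ := ofReal_integral_le_lintegral_ofReal (hA.add hD)
    _ ≤ ∫⁻ x, ENNReal.ofReal (B x) ∂μ :=
        lintegral_mono_ae (h.mono fun _ => ENNReal.ofReal_le_ofReal)

lemma exists_forall_le_of_eventually_cocompact {X : Type*} [TopologicalSpace X] {f : X → ℝ}
    {a : ℝ} (hf : Continuous f) (h : ∀ᶠ x in cocompact X, f x ≤ a) : ∃ C, ∀ x, f x ≤ C := by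
  obtain ⟨K, hK, hKf⟩ := mem_cocompact.1 h
  obtain ⟨C, hC⟩ := hK.bddAbove_image hf.continuousOn
  refine ⟨max C a, fun x => ?_⟩
  by_cases hx : x ∈ K
  · exact (hC (Set.mem_image_of_mem f hx)).trans (le_max_left _ _)
  · exact (hKf hx).trans (le_max_right _ _)

lemma lintegral_le_of_eventually_eq {X : Type*} [MeasurableSpace X] {μ : Measure X}
    {f : ℕ → X → ℝ≥0∞} {F : X → ℝ≥0∞} {B : ℝ≥0∞} (hf : ∀ n, Measurable (f n))
    (hF : ∀ x, ∀ᶠ n in atTop, f n x = F x) (hB : ∀ n, ∫⁻ x, f n x ∂μ ≤ B) :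
    ∫⁻ x, F x ∂μ ≤ B :=
  calc ∫⁻ x, F x ∂μ = ∫⁻ x, liminf (fun n => f n x) atTop ∂μ := by
        congr with x
        exact (tendsto_const_nhds.congr' ((hF x).mono fun _ => Eq.symm)).liminf_eq.symm
    _ ≤ liminf (fun n => ∫⁻ x, f n x ∂μ) atTop := lintegral_liminf_le hf
    _ ≤ B := (liminf_le_liminf (Eventually.of_forall hB)).trans_eq (liminf_const B)

lemma rpow_le_one_add_sq {t s : ℝ} (ht : 0 ≤ t) (hs0 : 0 ≤ s) (hs : s ≤ 2) :
    t ^ s ≤ 1 + t ^ 2 := by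
  rcases le_total t 1 with h | h
  · exact (Real.rpow_le_one ht h hs0).trans (le_add_of_nonneg_right (sq_nonneg t))
  · rw [← Real.rpow_two]
    exact (Real.rpow_le_rpow_of_exponent_le h hs).trans (le_add_of_nonneg_left zero_le_one)

section HorizontalCalculus

/-- Horizontal vectors, in the orthonormal frame `(X¹, X²)`. -/
abbrev HVec : Type := EuclideanSpace ℝ (Fin 2)

/-- The sub-gradient `∇f = (X¹f, X²f)` as a vector, so that `hGrad f x` is its norm. -/
def hGradient (f : Spin3 → ℝ) (x : Spin3) : HVec := !₂[X1 f x, X2 f x]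

/-- The divergence `X¹V₁ + X²V₂` of a horizontal vector field. -/
def hDivergence (V : Spin3 → HVec) (x : Spin3) : ℝ :=
  X1 (fun y => V y 0) x + X2 (fun y => V y 1) x

variable {f g : Spin3 → ℝ} {U V : Spin3 → HVec} {x : Spin3}

lemma norm_hGradient (f : Spin3 → ℝ) (x : Spin3) : ‖hGradient f x‖ = hGrad f x := by
  simp [hGradient, hGrad, EuclideanSpace.norm_eq]

lemma hGradient_mul (hf : DifferentiableAt ℝ f x) (hg : DifferentiableAt ℝ g x) :
    hGradient (fun y => f y * g y) x = f x • hGradient g x + g x • hGradient f x := by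
  ext i
  fin_cases i <;> simp [hGradient, X1, X2, fderiv_fun_mul hf hg] <;> ring

lemma hGradient_comp {φ : ℝ → ℝ} {φ' : ℝ} (hφ : HasDerivAt φ φ' (f x))
    (hf : DifferentiableAt ℝ f x) : hGradient (fun y => φ (f y)) x = φ' • hGradient f x := by
  have hfderiv : fderiv ℝ (fun y => φ (f y)) x = φ' • fderiv ℝ f x :=
    (hφ.comp_hasFDerivAt x hf.hasFDerivAt).fderiv
  ext i
  fin_cases i <;> simp [hGradient, X1, X2, hfderiv] <;> ring

lemma hDivergence_sub (hU : DifferentiableAt ℝ U x) (hV : DifferentiableAt ℝ V x) :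
    hDivergence (fun y => U y - V y) x = hDivergence U x - hDivergence V x := by
  rw [differentiableAt_euclidean] at hU hV
  simp only [hDivergence, X1, X2, PiLp.sub_apply, fderiv_fun_sub (hU _) (hV _),
    sub_apply]
  ring

lemma hDivergence_smul (hf : DifferentiableAt ℝ f x) (hV : DifferentiableAt ℝ V x) :
    hDivergence (fun y => f y • V y) x =
      f x * hDivergence V x + inner ℝ (hGradient f x) (V x) := by
  rw [differentiableAt_euclidean] at hV
  simp [hDivergence, hGradient, X1, X2, fderiv_fun_mul hf (hV _), PiLp.inner_apply]
  ring

lemma continuous_hGradient (hf : ContDiff ℝ 1 f) : Continuous (hGradient f) := by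
  have (v : Spin3) : Continuous fun y => fderiv ℝ f y v :=
    (hf.continuous_fderiv one_ne_zero).clm_apply continuous_const
  unfold hGradient X1 X2
  fun_prop

lemma continuous_hDivergence (hV : ContDiff ℝ 1 V) : Continuous (hDivergence V) := by
  have (i : Fin 2) (v : Spin3) : Continuous fun y => fderiv ℝ (fun y => V y i) y v :=
    ((contDiff_euclidean.1 hV i).continuous_fderiv one_ne_zero).clm_apply continuous_const
  unfold hDivergence X1 X2
  fun_prop

/-- The coefficient `2x₂V₁ − 2x₁V₂` of `∂₃` in the first-order operator `V₁X¹ + V₂X²`. -/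
def verticalPart (V : Spin3 → HVec) (x : Spin3) : ℝ := 2 * x 1 * V x 0 - 2 * x 0 * V x 1

lemma fderiv_coord (i : Fin 3) (x : Spin3) :
    fderiv ℝ (fun y : Spin3 => y i) x = ContinuousLinearMap.proj i :=
  (ContinuousLinearMap.proj (R := ℝ) (φ := fun _ : Fin 3 => ℝ) i).fderiv

lemma hDivergence_eq (hV : DifferentiableAt ℝ V x) :
    hDivergence V x = fderiv ℝ (fun y => V y 0) x (Pi.single 0 1) +
      fderiv ℝ (fun y => V y 1) x (Pi.single 1 1) +
      fderiv ℝ (verticalPart V) x (Pi.single 2 1) := by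
  rw [differentiableAt_euclidean] at hV
  have := hV 0
  have := hV 1
  unfold verticalPart
  simp (disch := fun_prop) [hDivergence, X1, X2, fderiv_fun_sub, fderiv_fun_mul, fderiv_coord,
    Pi.single_apply]
  ring

lemma integrable_hDivergence_and_integral_eq_zero (hV : LocallyLipschitz V)
    (hc : HasCompactSupport V) :
    Integrable (hDivergence V) ∧ ∫ x, hDivergence V x = 0 := by
  have hcoord (i : Fin 2) : LocallyLipschitz fun y => V y i :=
    (EuclideanSpace.proj (𝕜 := ℝ) i).lipschitz.locallyLipschitz.comp hV
  have hcoordc (i : Fin 2) : HasCompactSupport fun y => V y i :=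
    hc.comp_left (g := fun v : HVec => v i) rfl
  have hvert : LocallyLipschitz (verticalPart V) := by
    have : ContDiff ℝ 1 fun u : Spin3 × HVec => 2 * u.1 1 * u.2 0 - 2 * u.1 0 * u.2 1 := by
      fun_prop
    exact this.locallyLipschitz.comp (LocallyLipschitz.id.prodMk hV)
  have hvertc : HasCompactSupport (verticalPart V) :=
    hc.mono fun x hx hVx => hx (by simp [verticalPart, hVx])
  have hae : hDivergence V =ᵐ[volume] (fun x => fderiv ℝ (fun y => V y 0) x (Pi.single 0 1)) +
      (fun x => fderiv ℝ (fun y => V y 1) x (Pi.single 1 1)) +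
      fun x => fderiv ℝ (verticalPart V) x (Pi.single 2 1) := by
    filter_upwards [ae_differentiableAt_of_locallyLipschitz hV] with x hx using hDivergence_eq hx
  have hint0 := integrable_fderiv_apply (μ := volume) (hcoord 0) (hcoordc 0) (Pi.single 0 1)
  have hint1 := integrable_fderiv_apply (μ := volume) (hcoord 1) (hcoordc 1) (Pi.single 1 1)
  have hint2 := integrable_fderiv_apply (μ := volume) hvert hvertc (Pi.single 2 1)
  refine ⟨((hint0.add hint1).add hint2).congr hae.symm, ?_⟩
  rw [integral_congr_ae hae, integral_add' (hint0.add hint1) hint2, integral_add' hint0 hint1,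
    integral_fderiv_apply_eq_zero (hcoord 0) (hcoordc 0),
    integral_fderiv_apply_eq_zero (hcoord 1) (hcoordc 1),
    integral_fderiv_apply_eq_zero hvert hvertc, add_zero, add_zero]

end HorizontalCalculus

section UBound

/-- The U-bound `∫ |g|^q η e^{-W} ≤ C ∫ (|∇g|^q + |g|^q) e^{-W}` for the single function `g`. -/
def UBound (q : ℝ) (η W : Spin3 → ℝ) (C : ℝ) (g : Spin3 → ℝ) : Prop :=
  ∫⁻ x, ENNReal.ofReal (|g x| ^ q * η x * Real.exp (-W x)) ≤
    ENNReal.ofReal C * ∫⁻ x, ENNReal.ofReal ((hGrad g x ^ q + |g x| ^ q) * Real.exp (-W x))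

lemma exists_young_const {q q' ε : ℝ} (hq : q.HolderConjugate q') (hε : 0 < ε) :
    ∃ K > 0, ∀ u a v : ℝ, 0 ≤ u → 0 ≤ a → 0 ≤ v →
      q * u ^ (q - 1) * (a * v) ≤ ε * (u ^ q * v ^ q') + K * a ^ q := by
  have hq0 := hq.pos
  have hq'0 := hq.symm.pos
  obtain ⟨δ, hδ, hδq'⟩ : ∃ δ > 0, δ ^ q' = ε * q' / q :=
    ⟨(ε * q' / q) ^ q'⁻¹, by positivity, Real.rpow_inv_rpow (by positivity) hq'0.ne'⟩
  refine ⟨(δ ^ q)⁻¹, by positivity, fun u a v hu ha hv => ?_⟩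
  have hexp : (u ^ (q - 1)) ^ q' = u ^ q := by rw [← Real.rpow_mul hu, hq.sub_one_mul_conj]
  calc q * u ^ (q - 1) * (a * v) = q * (a / δ * (δ * (u ^ (q - 1) * v))) := by field_simp
    _ ≤ q * ((a / δ) ^ q / q + (δ * (u ^ (q - 1) * v)) ^ q' / q') := by
        gcongr
        exact Real.young_inequality_of_nonneg (by positivity) (by positivity) hq
    _ = ε * (u ^ q * v ^ q') + (δ ^ q)⁻¹ * a ^ q := by
        rw [Real.div_rpow ha hδ.le, Real.mul_rpow hδ.le (by positivity),
          Real.mul_rpow (by positivity) hv, hexp, hδq']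
        field_simp
        ring

variable {q : ℝ} {W g : Spin3 → ℝ} {V : Spin3 → HVec} {x : Spin3}

lemma hDivergence_weighted_smul (hq : 1 < q) (hg : DifferentiableAt ℝ g x)
    (hW : DifferentiableAt ℝ W x) (hV : DifferentiableAt ℝ V x) :
    hDivergence (fun y => (|g y| ^ q * Real.exp (-W y)) • V y) x =
      (|g x| ^ q * (hDivergence V x - inner ℝ (hGradient W x) (V x)) +
        q * |g x| ^ (q - 2) * g x * inner ℝ (hGradient g x) (V x)) * Real.exp (-W x) := by
  have hpow : HasDerivAt (fun t : ℝ => |t| ^ q) (q * |g x| ^ (q - 2) * g x) (g x) :=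
    hasDerivAt_abs_rpow (g x) hq
  have hexp : HasDerivAt (fun t : ℝ => Real.exp (-t)) (-Real.exp (-W x)) (W x) := by
    simpa using (hasDerivAt_neg (W x)).exp
  have hpow_diff : DifferentiableAt ℝ (fun y => |g y| ^ q) x :=
    hpow.differentiableAt.comp x hg
  have hexp_diff : DifferentiableAt ℝ (fun y => Real.exp (-W y)) x := by fun_prop
  rw [hDivergence_smul (hpow_diff.fun_mul hexp_diff) hV, hGradient_mul hpow_diff hexp_diff,
    hGradient_comp hpow hg, hGradient_comp hexp hW]
  simp only [inner_add_left, real_inner_smul_left]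
  ring

lemma add_hDivergence_weighted_smul_le {q' ε K C e : ℝ} (hq : 1 < q)
    (hg : DifferentiableAt ℝ g x) (hW : DifferentiableAt ℝ W x) (hV : DifferentiableAt ℝ V x)
    (hyoung : ∀ u a v : ℝ, 0 ≤ u → 0 ≤ a → 0 ≤ v →
      q * u ^ (q - 1) * (a * v) ≤ ε * (u ^ q * v ^ q') + K * a ^ q)
    (h : e + hDivergence V x + ε * ‖V x‖ ^ q' ≤ inner ℝ (hGradient W x) (V x) + C) :
    |g x| ^ q * e * Real.exp (-W x) +
        hDivergence (fun y => (|g y| ^ q * Real.exp (-W y)) • V y) x ≤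
      (K * hGrad g x ^ q + C * |g x| ^ q) * Real.exp (-W x) := by
  have hcross : q * |g x| ^ (q - 2) * g x * inner ℝ (hGradient g x) (V x) ≤
      ε * (|g x| ^ q * ‖V x‖ ^ q') + K * hGrad g x ^ q := by
    have hpow : |g x| ^ (q - 2) * |g x| = |g x| ^ (q - 1) := by
      rw [← Real.rpow_add_one' (abs_nonneg _) (by linarith)]
      ring_nf
    rw [← norm_hGradient]
    calc q * |g x| ^ (q - 2) * g x * inner ℝ (hGradient g x) (V x)
        ≤ |q * |g x| ^ (q - 2) * g x * inner ℝ (hGradient g x) (V x)| := le_abs_self _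
      _ = q * |g x| ^ (q - 1) * |inner ℝ (hGradient g x) (V x)| := by
          rw [abs_mul, abs_mul, abs_of_nonneg (by positivity), mul_assoc q, hpow]
      _ ≤ q * |g x| ^ (q - 1) * (‖hGradient g x‖ * ‖V x‖) := by
          gcongr
          exact abs_real_inner_le_norm _ _
      _ ≤ _ := hyoung _ _ _ (abs_nonneg _) (norm_nonneg _) (norm_nonneg _)
  rw [hDivergence_weighted_smul hq hg hW hV, ← add_mul]
  refine mul_le_mul_of_nonneg_right ?_ (Real.exp_pos _).le
  have := mul_le_mul_of_nonneg_left h (by positivity : 0 ≤ |g x| ^ q)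
  linarith

lemma exists_uBound_of_hasCompactSupport {q' ε C : ℝ} {η : Spin3 → ℝ}
    (hq : q.HolderConjugate q') (hε : 0 < ε) (hη : Continuous η) (hη0 : 0 ≤ η)
    (hW : LocallyLipschitz W) (hV : LocallyLipschitz V)
    (h : ∀ᵐ x, η x + hDivergence V x + ε * ‖V x‖ ^ q' ≤ inner ℝ (hGradient W x) (V x) + C) :
    ∃ C' > 0, ∀ g, LocallyLipschitz g → HasCompactSupport g → UBound q η W C' g := by
  obtain ⟨K, hK, hyoung⟩ := exists_young_const hq hε
  refine ⟨K + |C|, by positivity, fun g hg hgc => ?_⟩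
  have hpow : LocallyLipschitz fun x => |g x| ^ q :=
    (contDiff_norm_rpow (E := ℝ) hq.lt).locallyLipschitz.comp hg
  have hexp : LocallyLipschitz fun x => Real.exp (-W x) :=
    (Real.contDiff_exp.comp contDiff_neg).locallyLipschitz.comp hW
  have hpowc : HasCompactSupport fun x => |g x| ^ q :=
    hgc.comp_left (g := fun t : ℝ => |t| ^ q) (by simp [hq.ne_zero])
  have hcontA : Continuous fun x => |g x| ^ q * η x * Real.exp (-W x) :=
    (hpow.continuous.mul hη).mul hexp.continuous
  have hintA := hcontA.integrable_of_hasCompactSupport (μ := volume) hpowc.mul_right.mul_right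
  have hA0 : ∀ x, 0 ≤ |g x| ^ q * η x * Real.exp (-W x) := fun x =>
    mul_nonneg (mul_nonneg (by positivity) (hη0 x)) (by positivity)
  have hweight : LocallyLipschitz fun x => |g x| ^ q * Real.exp (-W x) :=
    locallyLipschitz_smul hpow hexp
  have hweightc : HasCompactSupport fun x => |g x| ^ q * Real.exp (-W x) := hpowc.mul_right
  obtain ⟨hintD, hD0⟩ := integrable_hDivergence_and_integral_eq_zero
    (locallyLipschitz_smul hweight hV) hweightc.smul_right
  have hle : ∀ᵐ x, |g x| ^ q * η x * Real.exp (-W x) +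
      hDivergence (fun y => (|g y| ^ q * Real.exp (-W y)) • V y) x ≤
        (K + |C|) * ((hGrad g x ^ q + |g x| ^ q) * Real.exp (-W x)) := by
    filter_upwards [h, ae_differentiableAt_of_locallyLipschitz hg,
      ae_differentiableAt_of_locallyLipschitz hW,
      ae_differentiableAt_of_locallyLipschitz hV] with x hx hgx hWx hVx
    have hgrad0 : 0 ≤ hGrad g x := Real.sqrt_nonneg _
    refine (add_hDivergence_weighted_smul_le hq.lt hgx hWx hVx hyoung hx).trans ?_
    rw [← mul_assoc, mul_add]
    gcongr
    · exact le_add_of_nonneg_right (abs_nonneg C)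
    · exact (le_abs_self C).trans (le_add_of_nonneg_left hK.le)
  refine (lintegral_ofReal_le_of_add_le hintA (ae_of_all _ hA0) hintD hD0 hle).trans_eq ?_
  simp_rw [ENNReal.ofReal_mul (by positivity : 0 ≤ K + |C|)]
  exact lintegral_const_mul' _ _ ENNReal.ofReal_ne_top

lemma hGrad_mul_le {f : Spin3 → ℝ} (hf : DifferentiableAt ℝ f x)
    (hg : DifferentiableAt ℝ g x) :
    hGrad (fun y => f y * g y) x ≤ |f x| * hGrad g x + |g x| * hGrad f x := by
  simp only [← norm_hGradient, hGradient_mul hf hg, ← Real.norm_eq_abs, ← norm_smul]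
  exact norm_add_le _ _

lemma hGrad_mul_rpow_add_le {M : ℝ} {χ : Spin3 → ℝ} (hq : 1 ≤ q)
    (hg : DifferentiableAt ℝ g x) (hχ : DifferentiableAt ℝ χ x) (hχ1 : |χ x| ≤ 1)
    (hM : hGrad χ x ≤ M) :
    hGrad (fun y => g y * χ y) x ^ q + |g x * χ x| ^ q ≤
      (2 ^ (q - 1) * (1 + M ^ q) + 1) * (hGrad g x ^ q + |g x| ^ q) := by
  have hgrad0 : 0 ≤ hGrad g x := Real.sqrt_nonneg _
  have hM0 : 0 ≤ M := (Real.sqrt_nonneg _).trans hM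
  have hgrad : hGrad (fun y => g y * χ y) x ≤ hGrad g x + M * |g x| :=
    calc _ ≤ |g x| * hGrad χ x + |χ x| * hGrad g x := hGrad_mul_le hg hχ
      _ ≤ |g x| * M + 1 * hGrad g x := by gcongr
      _ = hGrad g x + M * |g x| := by ring
  have hfun : |g x * χ x| ≤ |g x| := by
    rw [abs_mul]
    exact mul_le_of_le_one_right (abs_nonneg _) hχ1
  calc hGrad (fun y => g y * χ y) x ^ q + |g x * χ x| ^ q
      ≤ (hGrad g x + M * |g x|) ^ q + |g x| ^ q := by
        gcongr
        exact Real.sqrt_nonneg _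
    _ ≤ 2 ^ (q - 1) * (hGrad g x ^ q + (M * |g x|) ^ q) + |g x| ^ q := by
        gcongr
        exact_mod_cast NNReal.rpow_add_le_mul_rpow_add_rpow ⟨_, hgrad0⟩
          ⟨M * |g x|, by positivity⟩ hq
    _ = 2 ^ (q - 1) * (hGrad g x ^ q + M ^ q * |g x| ^ q) + |g x| ^ q := by
        rw [Real.mul_rpow hM0 (abs_nonneg _)]
    _ ≤ (2 ^ (q - 1) * (1 + M ^ q) + 1) * (hGrad g x ^ q + |g x| ^ q) := by
        have : 0 ≤ hGrad g x ^ q * (2 ^ (q - 1) * M ^ q + 1) + 2 ^ (q - 1) * |g x| ^ q := by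
          positivity
        linarith

lemma UBound.lintegral_mul_le {C M : ℝ} {η χ : Spin3 → ℝ} (hq : 1 ≤ q)
    (hg : LocallyLipschitz g) (hχ : Differentiable ℝ χ) (hχ_le : ∀ x, |χ x| ≤ 1)
    (hM : ∀ x, hGrad χ x ≤ M) (h : UBound q η W C fun x => g x * χ x) :
    ∫⁻ x, ENNReal.ofReal (|g x * χ x| ^ q * η x * Real.exp (-W x)) ≤
      ENNReal.ofReal (C * (2 ^ (q - 1) * (1 + M ^ q) + 1)) *
        ∫⁻ x, ENNReal.ofReal ((hGrad g x ^ q + |g x| ^ q) * Real.exp (-W x)) := by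
  have hM0 : 0 ≤ M := (Real.sqrt_nonneg _).trans (hM 0)
  have hK0 : 0 ≤ 2 ^ (q - 1) * (1 + M ^ q) + 1 := by positivity
  rw [ENNReal.ofReal_mul' hK0, mul_assoc, ← lintegral_const_mul' _ _ ENNReal.ofReal_ne_top]
  refine h.trans (mul_le_mul_right (lintegral_mono_ae ?_) _)
  filter_upwards [ae_differentiableAt_of_locallyLipschitz hg] with x hx
  rw [← ENNReal.ofReal_mul hK0, ← mul_assoc]
  gcongr
  exact hGrad_mul_rpow_add_le hq hx (hχ x) (hχ_le x) (hM x)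

lemma UBound.of_forall_mul {C M : ℝ} {η : Spin3 → ℝ} {χ : ℕ → Spin3 → ℝ} (hq : 1 ≤ q)
    (hη : Continuous η) (hW : Continuous W) (hg : LocallyLipschitz g)
    (hχ : ∀ n, Differentiable ℝ (χ n)) (hχ_le : ∀ n x, |χ n x| ≤ 1)
    (hχ_one : ∀ x, ∀ᶠ n in atTop, χ n x = 1) (hM : ∀ n x, hGrad (χ n) x ≤ M)
    (h : ∀ n, UBound q η W C fun x => g x * χ n x) :
    UBound q η W (C * (2 ^ (q - 1) * (1 + M ^ q) + 1)) g := by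
  refine lintegral_le_of_eventually_eq (fun n => ?_)
    (fun x => (hχ_one x).mono fun n hn => by rw [hn, mul_one])
    fun n => (h n).lintegral_mul_le hq hg (hχ n) (hχ_le n) (hM n)
  have hpow : Continuous fun x => |g x * χ n x| ^ q :=
    (hg.continuous.mul (hχ n).continuous).abs.rpow_const fun _ => Or.inr (by linarith)
  exact ((hpow.mul hη).mul (Real.continuous_exp.comp hW.neg)).measurable.ennreal_ofReal

end UBound

section KaplanQuartic

/-- The fourth power `N⁴ = (x₁² + x₂²)² + 16x₃²` of the Kaplan norm, a polynomial. -/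
def kaplanQuartic (x : Spin3) : ℝ := (x 0 ^ 2 + x 1 ^ 2) ^ 2 + 16 * x 2 ^ 2

/-- The horizontal projection `(x₁, x₂)`, viewed as a horizontal vector field. -/
def hProj (x : Spin3) : HVec := !₂[x 0, x 1]

lemma kaplanQuartic_nonneg (x : Spin3) : 0 ≤ kaplanQuartic x := by
  unfold kaplanQuartic
  positivity

lemma contDiff_kaplanQuartic {n : WithTop ℕ∞} : ContDiff ℝ n kaplanQuartic := by
  unfold kaplanQuartic
  fun_prop

lemma contDiff_hProj {n : WithTop ℕ∞} : ContDiff ℝ n hProj :=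
  contDiff_euclidean.2 (Fin.forall_fin_two.2 ⟨contDiff_apply ℝ ℝ 0, contDiff_apply ℝ ℝ 1⟩)

lemma norm_hProj_sq (x : Spin3) : ‖hProj x‖ ^ 2 = x 0 ^ 2 + x 1 ^ 2 := by
  simp [hProj, EuclideanSpace.norm_sq_eq]

lemma hDivergence_hProj (x : Spin3) : hDivergence hProj x = 2 := by
  simp [hDivergence, hProj, X1, X2, fderiv_coord]
  norm_num

lemma hGradient_kaplanQuartic (x : Spin3) : hGradient kaplanQuartic x =
    !₂[4 * (x 0 ^ 2 + x 1 ^ 2) * x 0 + 64 * x 1 * x 2,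
      4 * (x 0 ^ 2 + x 1 ^ 2) * x 1 - 64 * x 0 * x 2] := by
  unfold kaplanQuartic
  ext i
  fin_cases i <;> simp (disch := fun_prop) [hGradient, X1, X2, fderiv_fun_add,
    fderiv_fun_pow, fderiv_const_mul, fderiv_coord, Pi.single_apply] <;> ring

lemma contDiff_hGradient_kaplanQuartic : ContDiff ℝ 1 (hGradient kaplanQuartic) := by
  rw [funext hGradient_kaplanQuartic]
  refine contDiff_euclidean.2 (Fin.forall_fin_two.2 ⟨?_, ?_⟩) <;>
    simp only [Matrix.cons_val_zero, Matrix.cons_val_one] <;> fun_prop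

lemma hDivergence_hGradient_kaplanQuartic (x : Spin3) :
    hDivergence (hGradient kaplanQuartic) x = 144 * ‖hProj x‖ ^ 2 := by
  simp (disch := fun_prop) [norm_hProj_sq, hDivergence, hGradient_kaplanQuartic, X1, X2,
    fderiv_fun_add, fderiv_fun_sub, fderiv_fun_mul, fderiv_fun_pow, fderiv_coord, Pi.single_apply]
  ring

lemma inner_hGradient_kaplanQuartic_hProj (x : Spin3) :
    inner ℝ (hGradient kaplanQuartic x) (hProj x) = 4 * (‖hProj x‖ ^ 2) ^ 2 := by
  rw [norm_hProj_sq]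
  simp [hGradient_kaplanQuartic, hProj, PiLp.inner_apply]
  ring

lemma norm_hGradient_kaplanQuartic_sq (x : Spin3) : ‖hGradient kaplanQuartic x‖ ^ 2 =
    16 * ‖hProj x‖ ^ 2 * (kaplanQuartic x + 240 * x 2 ^ 2) := by
  rw [norm_hProj_sq]
  simp [hGradient_kaplanQuartic, kaplanQuartic, EuclideanSpace.norm_sq_eq]
  ring

lemma le_norm_hGradient_kaplanQuartic_sq (x : Spin3) :
    16 * ‖hProj x‖ ^ 2 * kaplanQuartic x ≤ ‖hGradient kaplanQuartic x‖ ^ 2 := by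
  rw [norm_hGradient_kaplanQuartic_sq]
  gcongr
  exact le_add_of_nonneg_right (by positivity)

lemma norm_hGradient_kaplanQuartic_sq_le (x : Spin3) :
    ‖hGradient kaplanQuartic x‖ ^ 2 ≤ 256 * ‖hProj x‖ ^ 2 * kaplanQuartic x := by
  have : kaplanQuartic x + 240 * x 2 ^ 2 ≤ 16 * kaplanQuartic x := by
    unfold kaplanQuartic
    nlinarith [sq_nonneg (x 0 ^ 2 + x 1 ^ 2)]
  calc ‖hGradient kaplanQuartic x‖ ^ 2
      = 16 * ‖hProj x‖ ^ 2 * (kaplanQuartic x + 240 * x 2 ^ 2) :=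
        norm_hGradient_kaplanQuartic_sq x
    _ ≤ 16 * ‖hProj x‖ ^ 2 * (16 * kaplanQuartic x) := by gcongr
    _ = 256 * ‖hProj x‖ ^ 2 * kaplanQuartic x := by ring

lemma norm_hProj_sq_sq_le (x : Spin3) : (‖hProj x‖ ^ 2) ^ 2 ≤ kaplanQuartic x := by
  rw [norm_hProj_sq, kaplanQuartic]
  exact le_add_of_nonneg_right (by positivity)

lemma norm_sq_le_one_add_kaplanQuartic (x : Spin3) : ‖x‖ ^ 2 ≤ 1 + kaplanQuartic x := by
  refine (Real.le_sqrt (norm_nonneg x) ?_).1 ?_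
  · linarith [kaplanQuartic_nonneg x]
  refine (pi_norm_le_iff_of_nonneg (Real.sqrt_nonneg _)).2 fun i => ?_
  rw [Real.norm_eq_abs]
  refine Real.abs_le_sqrt ?_
  unfold kaplanQuartic
  fin_cases i <;> simp <;>
    nlinarith [sq_nonneg (x 0 ^ 2 + x 1 ^ 2 - 1), sq_nonneg (x 0), sq_nonneg (x 1),
      sq_nonneg (x 2)]

lemma tendsto_kaplanQuartic : Tendsto kaplanQuartic (cocompact Spin3) atTop := by
  have hsq : Tendsto (fun x : Spin3 => ‖x‖ ^ 2) (cocompact Spin3) atTop :=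
    (tendsto_pow_atTop two_ne_zero).comp (tendsto_norm_cocompact_atTop (E := Spin3))
  simpa using tendsto_atTop_add_const_left _ (-1)
    (tendsto_atTop_mono norm_sq_le_one_add_kaplanQuartic hsq)

lemma contDiff_kaplanQuartic_rpow {β : ℝ} (hβ : 1 / 2 < β) :
    ContDiff ℝ 1 fun x => kaplanQuartic x ^ β := by
  have hnorm (x : Spin3) :
      kaplanQuartic x = ‖(!₂[x 0 ^ 2 + x 1 ^ 2, 4 * x 2] : EuclideanSpace ℝ (Fin 2))‖ ^ 2 := by
    simp [kaplanQuartic, EuclideanSpace.norm_sq_eq]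
    ring
  have hpow (x : Spin3) : kaplanQuartic x ^ β =
      ‖(!₂[x 0 ^ 2 + x 1 ^ 2, 4 * x 2] : EuclideanSpace ℝ (Fin 2))‖ ^ (2 * β) := by
    rw [hnorm, ← Real.rpow_natCast, ← Real.rpow_mul (norm_nonneg _), Nat.cast_two]
  simp_rw [hpow]
  refine (contDiff_norm_rpow (by linarith)).comp (contDiff_euclidean.2
    (Fin.forall_fin_two.2 ⟨?_, ?_⟩)) <;>
    simp only [Matrix.cons_val_zero, Matrix.cons_val_one] <;> fun_prop

lemma kaplan_rpow (x : Spin3) (e : ℝ) : kaplan x ^ e = kaplanQuartic x ^ (e / 4) := by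
  rw [kaplan, ← kaplanQuartic, ← Real.rpow_mul (kaplanQuartic_nonneg x), one_div_mul_eq_div]

end KaplanQuartic

section KaplanField

/-- The test field `Q^{β-1} ∇P − Q^{β-1/2} z` with `P = N⁴`, `Q = 1 + P` and `z = (x₁, x₂)`. -/
def kaplanField (β : ℝ) (x : Spin3) : HVec :=
  (1 + kaplanQuartic x) ^ (β - 1) • hGradient kaplanQuartic x -
    (1 + kaplanQuartic x) ^ (β - 1 / 2) • hProj x

lemma one_add_kaplanQuartic_pos (x : Spin3) : 0 < 1 + kaplanQuartic x :=
  add_pos_of_pos_of_nonneg one_pos (kaplanQuartic_nonneg x)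

lemma contDiff_one_add_kaplanQuartic_rpow (e : ℝ) {n : WithTop ℕ∞} :
    ContDiff ℝ n fun x => (1 + kaplanQuartic x) ^ e :=
  (contDiff_const.add contDiff_kaplanQuartic).rpow_const_of_ne
    fun x => (one_add_kaplanQuartic_pos x).ne'

lemma contDiff_kaplanField (β : ℝ) : ContDiff ℝ 1 (kaplanField β) :=
  ((contDiff_one_add_kaplanQuartic_rpow _).smul contDiff_hGradient_kaplanQuartic).sub
    ((contDiff_one_add_kaplanQuartic_rpow _).smul contDiff_hProj)

lemma hGradient_one_add_kaplanQuartic_rpow (e : ℝ) (x : Spin3) :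
    hGradient (fun y => (1 + kaplanQuartic y) ^ e) x =
      (e * (1 + kaplanQuartic x) ^ (e - 1)) • hGradient kaplanQuartic x := by
  have hderiv : HasDerivAt (fun t : ℝ => (1 + t) ^ e)
      (e * (1 + kaplanQuartic x) ^ (e - 1)) (kaplanQuartic x) := by
    simpa using ((hasDerivAt_id (kaplanQuartic x)).const_add (1 : ℝ)).rpow_const (p := e)
      (Or.inl (one_add_kaplanQuartic_pos x).ne')
  exact hGradient_comp hderiv (contDiff_kaplanQuartic.differentiable one_ne_zero x)

lemma hDivergence_kaplanField (β : ℝ) (x : Spin3) :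
    hDivergence (kaplanField β) x =
      144 * ‖hProj x‖ ^ 2 * (1 + kaplanQuartic x) ^ (β - 1) +
        (β - 1) * (1 + kaplanQuartic x) ^ (β - 1 - 1) * ‖hGradient kaplanQuartic x‖ ^ 2 -
      (2 * (1 + kaplanQuartic x) ^ (β - 1 / 2) + (β - 1 / 2) *
        (1 + kaplanQuartic x) ^ (β - 1 / 2 - 1) * (4 * (‖hProj x‖ ^ 2) ^ 2)) := by
  have hpow (e : ℝ) : DifferentiableAt ℝ (fun y => (1 + kaplanQuartic y) ^ e) x :=
    (contDiff_one_add_kaplanQuartic_rpow e).differentiable one_ne_zero x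
  have hgrad : DifferentiableAt ℝ (hGradient kaplanQuartic) x :=
    contDiff_hGradient_kaplanQuartic.differentiable one_ne_zero x
  have hproj : DifferentiableAt ℝ hProj x := contDiff_hProj.differentiable one_ne_zero x
  unfold kaplanField
  rw [hDivergence_sub ((hpow _).fun_smul hgrad) ((hpow _).fun_smul hproj),
    hDivergence_smul (hpow _) hgrad, hDivergence_smul (hpow _) hproj,
    hGradient_one_add_kaplanQuartic_rpow, hGradient_one_add_kaplanQuartic_rpow,
    hDivergence_hGradient_kaplanQuartic, hDivergence_hProj, real_inner_smul_left,
    real_inner_smul_left, inner_hGradient_kaplanQuartic_hProj, real_inner_self_eq_norm_sq]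
  ring

lemma hDivergence_kaplanField_le {β : ℝ} (hβ : 1 / 2 ≤ β) (x : Spin3) :
    hDivergence (kaplanField β) x ≤
      (144 + 256 * |β - 1|) * (‖hProj x‖ ^ 2 * (1 + kaplanQuartic x) ^ (β - 1)) -
        2 * (1 + kaplanQuartic x) ^ (β - 1 / 2) := by
  have hP := kaplanQuartic_nonneg x
  have hQ := one_add_kaplanQuartic_pos x
  have hgrad : (β - 1) * (1 + kaplanQuartic x) ^ (β - 1 - 1) *
      ‖hGradient kaplanQuartic x‖ ^ 2 ≤
        256 * |β - 1| * (‖hProj x‖ ^ 2 * (1 + kaplanQuartic x) ^ (β - 1)) :=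
    calc _ ≤ |β - 1| * (1 + kaplanQuartic x) ^ (β - 1 - 1) *
          (256 * ‖hProj x‖ ^ 2 * (1 + kaplanQuartic x)) := by
          gcongr
          · exact le_abs_self _
          · refine (norm_hGradient_kaplanQuartic_sq_le x).trans ?_
            gcongr
            exact le_add_of_nonneg_left zero_le_one
      _ = _ := by
          rw [Real.rpow_sub_one hQ.ne']
          field_simp
  have hproj : 0 ≤ (β - 1 / 2) * (1 + kaplanQuartic x) ^ (β - 1 / 2 - 1) *
      (4 * (‖hProj x‖ ^ 2) ^ 2) :=
    mul_nonneg (mul_nonneg (sub_nonneg.2 hβ) (by positivity)) (by positivity)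
  rw [hDivergence_kaplanField]
  linarith

lemma norm_kaplanField_sq_le (β : ℝ) (x : Spin3) :
    ‖kaplanField β x‖ ^ 2 ≤
      514 * (‖hProj x‖ ^ 2 * (1 + kaplanQuartic x) ^ (β - 1) * (1 + kaplanQuartic x) ^ β) := by
  have hQ := one_add_kaplanQuartic_pos x
  have hpow : (1 + kaplanQuartic x) ^ (β - 1) * (1 + kaplanQuartic x) =
      (1 + kaplanQuartic x) ^ β := by
    rw [Real.rpow_sub_one hQ.ne', div_mul_cancel₀ _ hQ.ne']
  have hpow_half : ((1 + kaplanQuartic x) ^ (β - 1 / 2)) ^ 2 =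
      (1 + kaplanQuartic x) ^ (β - 1) * (1 + kaplanQuartic x) ^ β := by
    rw [sq, ← Real.rpow_add hQ, ← Real.rpow_add hQ]
    ring_nf
  have hgrad : ‖hGradient kaplanQuartic x‖ ^ 2 ≤
      256 * ‖hProj x‖ ^ 2 * (1 + kaplanQuartic x) := by
    refine (norm_hGradient_kaplanQuartic_sq_le x).trans ?_
    gcongr
    exact le_add_of_nonneg_left zero_le_one
  calc ‖kaplanField β x‖ ^ 2
      ≤ (‖(1 + kaplanQuartic x) ^ (β - 1) • hGradient kaplanQuartic x‖ +
          ‖(1 + kaplanQuartic x) ^ (β - 1 / 2) • hProj x‖) ^ 2 := by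
        gcongr
        exact norm_sub_le _ _
    _ ≤ 2 * (‖(1 + kaplanQuartic x) ^ (β - 1) • hGradient kaplanQuartic x‖ ^ 2 +
          ‖(1 + kaplanQuartic x) ^ (β - 1 / 2) • hProj x‖ ^ 2) := add_sq_le
    _ = 2 * (((1 + kaplanQuartic x) ^ (β - 1)) ^ 2 * ‖hGradient kaplanQuartic x‖ ^ 2 +
          (1 + kaplanQuartic x) ^ (β - 1) * (1 + kaplanQuartic x) ^ β * ‖hProj x‖ ^ 2) := by
        simp only [norm_smul, mul_pow, Real.norm_eq_abs, sq_abs, hpow_half]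
    _ ≤ 2 * (((1 + kaplanQuartic x) ^ (β - 1)) ^ 2 *
          (256 * ‖hProj x‖ ^ 2 * (1 + kaplanQuartic x)) +
          (1 + kaplanQuartic x) ^ (β - 1) * (1 + kaplanQuartic x) ^ β * ‖hProj x‖ ^ 2) := by
        gcongr
    _ = 514 * (‖hProj x‖ ^ 2 * (1 + kaplanQuartic x) ^ (β - 1) *
          (1 + kaplanQuartic x) ^ β) := by
        rw [← hpow]
        ring

lemma norm_hProj_sq_mul_sqrt_le {x : Spin3} (hx : 1 ≤ kaplanQuartic x) :
    ‖hProj x‖ ^ 2 * √(1 + kaplanQuartic x) ≤ 2 * kaplanQuartic x :=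
  calc ‖hProj x‖ ^ 2 * √(1 + kaplanQuartic x)
      ≤ √(kaplanQuartic x) * √(4 * kaplanQuartic x) := by
        gcongr
        · exact Real.le_sqrt_of_sq_le (norm_hProj_sq_sq_le x)
        · linarith
    _ = 2 * kaplanQuartic x := by
        rw [← Real.sqrt_mul (kaplanQuartic_nonneg x),
          show kaplanQuartic x * (4 * kaplanQuartic x) = (2 * kaplanQuartic x) ^ 2 by ring,
          Real.sqrt_sq (by linarith)]

lemma le_inner_hGradient_kaplanQuartic_kaplanField (β : ℝ) {x : Spin3}
    (hx : 1 ≤ kaplanQuartic x) :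
    8 * (‖hProj x‖ ^ 2 * (1 + kaplanQuartic x) ^ (β - 1)) * kaplanQuartic x ≤
      inner ℝ (hGradient kaplanQuartic x) (kaplanField β x) := by
  have hQ := one_add_kaplanQuartic_pos x
  have hpow_half : (1 + kaplanQuartic x) ^ (β - 1 / 2) =
      (1 + kaplanQuartic x) ^ (β - 1) * √(1 + kaplanQuartic x) := by
    rw [Real.sqrt_eq_rpow, ← Real.rpow_add hQ]
    ring_nf
  calc 8 * (‖hProj x‖ ^ 2 * (1 + kaplanQuartic x) ^ (β - 1)) * kaplanQuartic x
      = (1 + kaplanQuartic x) ^ (β - 1) * (16 * ‖hProj x‖ ^ 2 * kaplanQuartic x -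
          4 * ‖hProj x‖ ^ 2 * (2 * kaplanQuartic x)) := by ring
    _ ≤ (1 + kaplanQuartic x) ^ (β - 1) * (‖hGradient kaplanQuartic x‖ ^ 2 -
          4 * ‖hProj x‖ ^ 2 * (‖hProj x‖ ^ 2 * √(1 + kaplanQuartic x))) := by
        gcongr ?_ * (?_ - ?_ * ?_)
        · exact le_norm_hGradient_kaplanQuartic_sq x
        · exact norm_hProj_sq_mul_sqrt_le hx
    _ = inner ℝ (hGradient kaplanQuartic x) (kaplanField β x) := by
        rw [kaplanField, inner_sub_right, real_inner_smul_right, real_inner_smul_right,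
          real_inner_self_eq_norm_sq, inner_hGradient_kaplanQuartic_hProj, hpow_half]
        ring

lemma hGradient_const_mul_kaplanQuartic_rpow (α β : ℝ) {x : Spin3}
    (hx : kaplanQuartic x ≠ 0) :
    hGradient (fun y => α * kaplanQuartic y ^ β) x =
      (α * (β * kaplanQuartic x ^ (β - 1))) • hGradient kaplanQuartic x :=
  hGradient_comp ((Real.hasDerivAt_rpow_const (Or.inl hx)).const_mul α)
    (contDiff_kaplanQuartic.differentiable one_ne_zero x)

lemma le_inner_hGradient_kaplanField {α β : ℝ} (hα : 0 ≤ α) (hβ : 0 ≤ β) {x : Spin3}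
    (hx : 1 ≤ kaplanQuartic x) :
    8 * (α * β * 2⁻¹ ^ β) *
        (‖hProj x‖ ^ 2 * (1 + kaplanQuartic x) ^ (β - 1) * (1 + kaplanQuartic x) ^ β) ≤
      inner ℝ (hGradient (fun y => α * kaplanQuartic y ^ β) x) (kaplanField β x) := by
  have hP : 0 < kaplanQuartic x := one_pos.trans_le hx
  have hQ := one_add_kaplanQuartic_pos x
  have hhalf : 2⁻¹ ^ β * (1 + kaplanQuartic x) ^ β ≤ kaplanQuartic x ^ β := by
    rw [← Real.mul_rpow (by norm_num) hQ.le]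
    gcongr
    linarith
  rw [hGradient_const_mul_kaplanQuartic_rpow α β hP.ne', real_inner_smul_left]
  calc 8 * (α * β * 2⁻¹ ^ β) *
        (‖hProj x‖ ^ 2 * (1 + kaplanQuartic x) ^ (β - 1) * (1 + kaplanQuartic x) ^ β)
      = 8 * α * β * (‖hProj x‖ ^ 2 * (1 + kaplanQuartic x) ^ (β - 1)) *
          (2⁻¹ ^ β * (1 + kaplanQuartic x) ^ β) := by ring
    _ ≤ 8 * α * β * (‖hProj x‖ ^ 2 * (1 + kaplanQuartic x) ^ (β - 1)) *
          kaplanQuartic x ^ β := by gcongr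
    _ = α * (β * kaplanQuartic x ^ (β - 1)) *
          (8 * (‖hProj x‖ ^ 2 * (1 + kaplanQuartic x) ^ (β - 1)) * kaplanQuartic x) := by
        rw [Real.rpow_sub_one hP.ne']
        field_simp
    _ ≤ _ := by
        gcongr
        exact le_inner_hGradient_kaplanQuartic_kaplanField β hx

lemma eventually_le_inner_kaplanField {α β : ℝ} (hα : 0 < α) (hβ : 1 / 2 ≤ β) :
    ∃ ε > 0, ∀ᶠ x in cocompact Spin3,
      2 * (1 + kaplanQuartic x) ^ (β - 1 / 2) + hDivergence (kaplanField β) x +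
          ε * ‖kaplanField β x‖ ^ 2 ≤
        inner ℝ (hGradient (fun y => α * kaplanQuartic y ^ β) x) (kaplanField β x) := by
  have hβ0 : 0 < β := by linarith
  set c : ℝ := α * β * 2⁻¹ ^ β
  have : 0 < c := by positivity
  have hQ_tendsto : Tendsto (fun x => 7 * c * (1 + kaplanQuartic x) ^ β)
      (cocompact Spin3) atTop :=
    ((tendsto_rpow_atTop hβ0).comp
      (tendsto_atTop_add_const_left _ 1 tendsto_kaplanQuartic)).const_mul_atTop (by positivity)
  refine ⟨c / 514, by positivity, ?_⟩
  filter_upwards [tendsto_kaplanQuartic.eventually_ge_atTop 1,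
    hQ_tendsto.eventually_ge_atTop (144 + 256 * |β - 1|)] with x hx hlarge
  have := one_add_kaplanQuartic_pos x
  calc 2 * (1 + kaplanQuartic x) ^ (β - 1 / 2) + hDivergence (kaplanField β) x +
        c / 514 * ‖kaplanField β x‖ ^ 2
      ≤ (144 + 256 * |β - 1|) * (‖hProj x‖ ^ 2 * (1 + kaplanQuartic x) ^ (β - 1)) +
          c / 514 * (514 * (‖hProj x‖ ^ 2 * (1 + kaplanQuartic x) ^ (β - 1) *
            (1 + kaplanQuartic x) ^ β)) := by
        gcongr
        · linarith [hDivergence_kaplanField_le hβ x]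
        · exact norm_kaplanField_sq_le β x
    _ ≤ 7 * c * (1 + kaplanQuartic x) ^ β *
            (‖hProj x‖ ^ 2 * (1 + kaplanQuartic x) ^ (β - 1)) +
          c / 514 * (514 * (‖hProj x‖ ^ 2 * (1 + kaplanQuartic x) ^ (β - 1) *
            (1 + kaplanQuartic x) ^ β)) := by gcongr
    _ = 8 * c * (‖hProj x‖ ^ 2 * (1 + kaplanQuartic x) ^ (β - 1) *
          (1 + kaplanQuartic x) ^ β) := by ring
    _ ≤ _ := le_inner_hGradient_kaplanField hα.le hβ0.le hx

lemma exists_forall_le_inner_kaplanField {α β : ℝ} (hα : 0 < α) (hβ : 1 / 2 < β) :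
    ∃ ε > 0, ∃ C, ∀ x,
      2 * (1 + kaplanQuartic x) ^ (β - 1 / 2) + hDivergence (kaplanField β) x +
          ε * ‖kaplanField β x‖ ^ 2 ≤
        inner ℝ (hGradient (fun y => α * kaplanQuartic y ^ β) x) (kaplanField β x) + C := by
  obtain ⟨ε, hε, hfar⟩ := eventually_le_inner_kaplanField hα hβ.le
  set L : Spin3 → ℝ := fun x => 2 * (1 + kaplanQuartic x) ^ (β - 1 / 2) +
    hDivergence (kaplanField β) x + ε * ‖kaplanField β x‖ ^ 2
  set R : Spin3 → ℝ := fun x =>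
    inner ℝ (hGradient (fun y => α * kaplanQuartic y ^ β) x) (kaplanField β x)
  have hL : Continuous L :=
    ((continuous_const.mul (contDiff_one_add_kaplanQuartic_rpow _ (n := 1)).continuous).add
      (continuous_hDivergence (contDiff_kaplanField β))).add
        (continuous_const.mul ((contDiff_kaplanField β).continuous.norm.pow 2))
  have hR : Continuous R :=
    (continuous_hGradient (contDiff_const.mul (contDiff_kaplanQuartic_rpow hβ))).inner
      (contDiff_kaplanField β).continuous
  obtain ⟨C, hC⟩ := exists_forall_le_of_eventually_cocompact (hL.sub hR)
    (hfar.mono fun x hx => sub_nonpos.2 hx)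
  exact ⟨ε, hε, C, fun x => sub_le_iff_le_add'.1 (hC x)⟩

end KaplanField

section Cutoff

/-- Smooth cutoffs with uniformly bounded sub-gradient: a bump function of `log (1 + N⁴) / (n + 1)`,
whose logarithm compensates the growth of `∇N⁴`. -/
def kaplanCutoff (n : ℕ) (x : Spin3) : ℝ :=
  (⟨1, 2, one_pos, one_lt_two⟩ : ContDiffBump (0 : ℝ))
    (Real.log (1 + kaplanQuartic x) / (n + 1))

lemma kaplanCutoff_mem_Icc (n : ℕ) (x : Spin3) : kaplanCutoff n x ∈ Set.Icc 0 1 :=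
  ⟨ContDiffBump.nonneg _, ContDiffBump.le_one _⟩

lemma contDiff_log_one_add_kaplanQuartic_div (n : ℕ) :
    ContDiff ℝ 1 fun x => Real.log (1 + kaplanQuartic x) / (n + 1) :=
  ((contDiff_const.add contDiff_kaplanQuartic).log
    fun x => (one_add_kaplanQuartic_pos x).ne').div_const _

lemma contDiff_kaplanCutoff (n : ℕ) : ContDiff ℝ 1 (kaplanCutoff n) :=
  (ContDiffBump.contDiff _).comp (contDiff_log_one_add_kaplanQuartic_div n)

lemma hasCompactSupport_kaplanCutoff (n : ℕ) : HasCompactSupport (kaplanCutoff n) := by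
  have hlog : Tendsto (fun x => Real.log (1 + kaplanQuartic x) / (n + 1))
      (cocompact Spin3) atTop :=
    (Real.tendsto_log_atTop.comp
      (tendsto_atTop_add_const_left _ 1 tendsto_kaplanQuartic)).atTop_div_const (by positivity)
  rw [hasCompactSupport_iff_eventuallyEq, coclosedCompact_eq_cocompact]
  filter_upwards [hlog.eventually_ge_atTop 2] with x hx
  refine ContDiffBump.zero_of_le_dist _ ?_
  rw [Real.dist_0_eq_abs]
  exact hx.trans (le_abs_self _)

lemma eventually_kaplanCutoff_eq_one (x : Spin3) : ∀ᶠ n in atTop, kaplanCutoff n x = 1 := by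
  have hlim : Tendsto (fun n : ℕ => Real.log (1 + kaplanQuartic x) / (n + 1)) atTop (nhds 0) :=
    tendsto_const_nhds.div_atTop
      (tendsto_atTop_add_const_right _ 1 tendsto_natCast_atTop_atTop)
  filter_upwards [hlim.eventually (Metric.closedBall_mem_nhds 0 one_pos)] with n hn
  exact ContDiffBump.one_of_mem_closedBall _ hn

lemma norm_hGradient_kaplanQuartic_le (x : Spin3) :
    ‖hGradient kaplanQuartic x‖ ≤ 16 * (1 + kaplanQuartic x) := by
  have hP := kaplanQuartic_nonneg x
  have hproj : ‖hProj x‖ ^ 2 ≤ 1 + kaplanQuartic x := by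
    nlinarith [norm_hProj_sq_sq_le x, sq_nonneg (‖hProj x‖ ^ 2 - 1)]
  refine (sq_le_sq₀ (norm_nonneg _) (by positivity)).1 ?_
  calc ‖hGradient kaplanQuartic x‖ ^ 2 ≤ 256 * ‖hProj x‖ ^ 2 * kaplanQuartic x :=
        norm_hGradient_kaplanQuartic_sq_le x
    _ ≤ 256 * (1 + kaplanQuartic x) * (1 + kaplanQuartic x) := by
        gcongr
        exact le_add_of_nonneg_left zero_le_one
    _ = (16 * (1 + kaplanQuartic x)) ^ 2 := by ring

lemma norm_hGradient_log_div_le (n : ℕ) (x : Spin3) :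
    ‖hGradient (fun y => Real.log (1 + kaplanQuartic y) / (n + 1)) x‖ ≤ 16 := by
  have hQ := one_add_kaplanQuartic_pos x
  have hderiv : HasDerivAt (fun t : ℝ => Real.log (1 + t) / (n + 1))
      ((1 + kaplanQuartic x)⁻¹ / (n + 1)) (kaplanQuartic x) := by
    simpa using (((hasDerivAt_id (kaplanQuartic x)).const_add (1 : ℝ)).log hQ.ne').div_const
      ((n : ℝ) + 1)
  rw [hGradient_comp hderiv (contDiff_kaplanQuartic.differentiable one_ne_zero x), norm_smul,
    Real.norm_of_nonneg (by positivity)]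
  calc (1 + kaplanQuartic x)⁻¹ / (n + 1) * ‖hGradient kaplanQuartic x‖
      ≤ (1 + kaplanQuartic x)⁻¹ / 1 * (16 * (1 + kaplanQuartic x)) := by
        gcongr
        · exact le_add_of_nonneg_left n.cast_nonneg
        · exact norm_hGradient_kaplanQuartic_le x
    _ = 16 := by field_simp

lemma exists_forall_hGrad_kaplanCutoff_le : ∃ M, ∀ n x, hGrad (kaplanCutoff n) x ≤ M := by
  let ψ : ContDiffBump (0 : ℝ) := ⟨1, 2, one_pos, one_lt_two⟩
  obtain ⟨K, hK⟩ := (ψ.contDiff (n := 1)).lipschitzWith_of_hasCompactSupport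
    ψ.hasCompactSupport one_ne_zero
  refine ⟨K * 16, fun n x => ?_⟩
  have hψ := ((ψ.contDiff (n := 1)).differentiable one_ne_zero
    (Real.log (1 + kaplanQuartic x) / (n + 1))).hasDerivAt
  have hgrad : hGradient (kaplanCutoff n) x = _ := hGradient_comp hψ
    ((contDiff_log_one_add_kaplanQuartic_div n).differentiable one_ne_zero x)
  rw [← norm_hGradient, hgrad, norm_smul]
  gcongr
  · exact norm_deriv_le_of_lipschitz hK
  · exact norm_hGradient_log_div_le n x

end Cutoff

section KaplanUBound

variable {α q p θ : ℝ}

lemma continuous_kaplan_rpow (hθ : 0 ≤ θ) : Continuous fun x => kaplan x ^ θ := by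
  simp_rw [kaplan_rpow]
  exact (contDiff_kaplanQuartic (n := 0)).continuous.rpow_const
    fun _ => Or.inr (by positivity)

lemma tendsto_kaplan_rpow (hθ : 0 < θ) :
    Tendsto (fun x => kaplan x ^ θ) (cocompact Spin3) atTop := by
  simp_rw [kaplan_rpow]
  exact (tendsto_rpow_atTop (by positivity)).comp tendsto_kaplanQuartic

lemma kaplan_rpow_nonneg (x : Spin3) (θ : ℝ) : 0 ≤ kaplan x ^ θ := by
  rw [kaplan_rpow]
  exact Real.rpow_nonneg (kaplanQuartic_nonneg x) _

lemma kaplan_rpow_le {e : ℝ} (hθ : 0 ≤ θ) (he : θ / 4 ≤ e) (x : Spin3) :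
    kaplan x ^ θ ≤ (1 + kaplanQuartic x) ^ e := by
  have hP := kaplanQuartic_nonneg x
  rw [kaplan_rpow]
  calc kaplanQuartic x ^ (θ / 4) ≤ (1 + kaplanQuartic x) ^ (θ / 4) := by gcongr; linarith
    _ ≤ (1 + kaplanQuartic x) ^ e := Real.rpow_le_rpow_of_exponent_le (by linarith) he

lemma exists_uBound_kaplan_of_hasCompactSupport (hα : 0 < α) (hq : 2 ≤ q) (hθ : 0 < θ)
    (hθp : θ ≤ p - 2) :
    ∃ C > 0, ∀ g, LocallyLipschitz g → HasCompactSupport g →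
      UBound q (fun x => kaplan x ^ θ) (fun x => α * kaplan x ^ p) C g := by
  have hconj : q.HolderConjugate (Real.conjExponent q) :=
    Real.HolderConjugate.conjExponent (by linarith)
  have hconj_le : Real.conjExponent q ≤ 2 := by
    rw [Real.conjExponent, div_le_iff₀] <;> linarith
  obtain ⟨ε, hε, C, hfield⟩ := exists_forall_le_inner_kaplanField (β := p / 4) hα (by linarith)
  simp_rw [kaplan_rpow _ p]
  refine exists_uBound_of_hasCompactSupport hconj hε (continuous_kaplan_rpow hθ.le)
    (fun x => kaplan_rpow_nonneg x θ)
    (contDiff_const.mul (contDiff_kaplanQuartic_rpow (by linarith))).locallyLipschitz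
    (contDiff_kaplanField (p / 4)).locallyLipschitz (C := C + ε) (ae_of_all _ fun x => ?_)
  have hη := kaplan_rpow_le hθ.le (by linarith : θ / 4 ≤ p / 4 - 1 / 2) x
  have hQ : 0 ≤ (1 + kaplanQuartic x) ^ (p / 4 - 1 / 2) :=
    Real.rpow_nonneg (one_add_kaplanQuartic_pos x).le _
  have hpow := mul_le_mul_of_nonneg_left
    (rpow_le_one_add_sq (norm_nonneg (kaplanField (p / 4) x)) hconj.symm.nonneg hconj_le) hε.le
  linarith [hfield x]

lemma exists_uBound_kaplan (hα : 0 < α) (hq : 2 ≤ q) (hθ : 0 < θ) (hθp : θ ≤ p - 2) :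
    ∃ C > 0, ∀ g, LocallyLipschitz g →
      UBound q (fun x => kaplan x ^ θ) (fun x => α * kaplan x ^ p) C g := by
  obtain ⟨C, hC, hcompact⟩ := exists_uBound_kaplan_of_hasCompactSupport hα hq hθ hθp
  obtain ⟨M, hM⟩ := exists_forall_hGrad_kaplanCutoff_le
  have hM0 : 0 ≤ M := (Real.sqrt_nonneg _).trans (hM 0 0)
  refine ⟨C * (2 ^ (q - 1) * (1 + M ^ q) + 1), by positivity, fun g hg => ?_⟩
  refine UBound.of_forall_mul (by linarith) (continuous_kaplan_rpow hθ.le)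
    (continuous_const.mul (continuous_kaplan_rpow (by linarith))) hg
    (fun n => (contDiff_kaplanCutoff n).differentiable one_ne_zero)
    (fun n x => abs_le.2 ⟨by linarith [(kaplanCutoff_mem_Icc n x).1],
      (kaplanCutoff_mem_Icc n x).2⟩)
    eventually_kaplanCutoff_eq_one hM fun n => ?_
  exact hcompact _ (locallyLipschitz_smul hg (contDiff_kaplanCutoff n).locallyLipschitz)
    (hasCompactSupport_kaplanCutoff n).mul_left

end KaplanUBound

theorem kaplan_U_bound_global_general (α p q θ : ℝ) (hα : 0 < α) (hq : 2 ≤ q) (hθ : 0 < θ)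
    (hθp : θ ≤ p - 2) :
    (∃ C : ℝ, 0 < C ∧
      ∀ g : Spin3 → ℝ, LocallyLipschitz g →
        ∫⁻ x, ENNReal.ofReal
            (|g x| ^ q * kaplan x ^ θ * Real.exp (-(α * kaplan x ^ p))) ≤
          ENNReal.ofReal C *
            ∫⁻ x, ENNReal.ofReal
              ((hGrad g x ^ q + |g x| ^ q) * Real.exp (-(α * kaplan x ^ p)))) ∧
      Continuous (fun x : Spin3 => kaplan x ^ θ) ∧
      (∀ x : Spin3, 0 ≤ kaplan x ^ θ) ∧
      Tendsto (fun x : Spin3 => kaplan x ^ θ) (cocompact Spin3) atTop :=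
  ⟨exists_uBound_kaplan hα hq hθ hθp, continuous_kaplan_rpow hθ.le,
    fun x => kaplan_rpow_nonneg x θ, tendsto_kaplan_rpow hθ⟩

/-- **Global U-bound for the Kaplan norm.** For `α > 0`, `p > 3`, `q ≥ 2` there is
`C ∈ (0,∞)`, depending only on `α, p, q`, such that for every locally Lipschitz `g`:
`∫ |g|^q N^{p−3} e^{−αN^p} dx ≤ C ∫ (|∇g|^q + |g|^q) e^{−αN^p} dx`; moreover
`η = N^{p−3}` is continuous, nonnegative, and diverges in all directions. -/
theorem kaplan_U_bound_global (α p q : ℝ) (hα : 0 < α) (hp : 3 < p) (hq : 2 ≤ q) :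
    (∃ C : ℝ, 0 < C ∧
      ∀ g : Spin3 → ℝ, LocallyLipschitz g →
        ∫⁻ x, ENNReal.ofReal
            (|g x| ^ q * kaplan x ^ (p - 3) * Real.exp (-(α * kaplan x ^ p))) ≤
          ENNReal.ofReal C *
            ∫⁻ x, ENNReal.ofReal
              ((hGrad g x ^ q + |g x| ^ q) * Real.exp (-(α * kaplan x ^ p)))) ∧
      Continuous (fun x : Spin3 => kaplan x ^ (p - 3)) ∧
      (∀ x : Spin3, 0 ≤ kaplan x ^ (p - 3)) ∧
      Tendsto (fun x : Spin3 => kaplan x ^ (p - 3)) (cocompact Spin3) atTop :=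
  kaplan_U_bound_global_general α p q (p - 3) hα hq (by linarith) (by linarith)
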